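/- Let P ⊆ ℝⁿ be a Delone set of finite local complexity, let k ≥ 1 be an integer, and let φ : ℝⁿ → ℝ be a C^k function whose differential dφ is strongly P-equivariant. Then the following are equivalent: (a) for every ε > 0 there exists a strongly P-equivariant C^k function φ_ε : ℝⁿ → ℝ such that sup over x ∈ ℝⁿ and all multi-indices α with |α| ≤ k of |D^α(φ − φ_ε)(x)| is less than ε; (b) for every ε > 0 there exists a finite partition of P into pairwise disjoint subsets P_1, …, P_N, each locally derivable from P, such that for every i ∈ {1, …, N} and all p, q ∈ P_i one has |φ(p) − φ(q)| < ε. -/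

import Mathlib

open Metric Set

noncomputable section

/-- Euclidean space ℝⁿ. -/
abbrev Euc (n : ℕ) := EuclideanSpace ℝ (Fin n)

/-- The translate `P - x = {p - x : p ∈ P}`. -/
def shiftSet {n : ℕ} (P : Set (Euc n)) (x : Euc n) : Set (Euc n) :=
  (fun p => p - x) '' P

/-- The `r`-patch of `P` around `x`: `B_r[P - x] = B(0,r) ∩ (P - x)`. -/
def patch {n : ℕ} (P : Set (Euc n)) (r : ℝ) (x : Euc n) : Set (Euc n) :=
  ball (0 : Euc n) r ∩ shiftSet P x

/-- `P` is uniformly discrete: there is a positive minimal distance between points. -/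
def UnifDiscrete {n : ℕ} (P : Set (Euc n)) : Prop :=
  ∃ δ > 0, ∀ p ∈ P, ∀ q ∈ P, p ≠ q → δ ≤ ‖p - q‖

/-- `P` is relatively dense: every ball of radius `R` contains a point of `P`. -/
def RelDense {n : ℕ} (P : Set (Euc n)) : Prop :=
  ∃ R > 0, ∀ x : Euc n, ∃ p ∈ P, ‖p - x‖ < R

/-- `P` has finite local complexity: for each `r > 0`, only finitely many `r`-patches
around points of `P`. -/
def FLC {n : ℕ} (P : Set (Euc n)) : Prop :=
  ∀ r > 0, {s : Set (Euc n) | ∃ x ∈ P, s = patch P r x}.Finite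

/-- `f` is `P`-equivariant with range `R`. -/
def EquivRange {n : ℕ} {F : Type*} (P : Set (Euc n)) (R : ℝ) (f : Euc n → F) : Prop :=
  ∀ x y : Euc n, patch P R x = patch P R y → f x = f y

/-- `f` is strongly `P`-equivariant: `P`-equivariant with some finite range `R > 0`. -/
def StrongEquiv {n : ℕ} {F : Type*} (P : Set (Euc n)) (f : Euc n → F) : Prop :=
  ∃ R > 0, EquivRange P R f

/-- `f`, viewed as a function on the subset `Q`, is `P`-equivariant with range `R`. -/
def EquivRangeOn {n : ℕ} {F : Type*} (P Q : Set (Euc n)) (R : ℝ) (f : Euc n → F) : Prop :=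
  ∀ x ∈ Q, ∀ y ∈ Q, patch P R x = patch P R y → f x = f y

/-- `f`, viewed as a function on the subset `Q`, is strongly `P`-equivariant. -/
def StrongEquivOn {n : ℕ} {F : Type*} (P Q : Set (Euc n)) (f : Euc n → F) : Prop :=
  ∃ R > 0, EquivRangeOn P Q R f

/-- `Q` is locally derivable from `P`. -/
def LocallyDerivable {n : ℕ} (P Q : Set (Euc n)) : Prop :=
  ∃ R > 0, ∀ x y : Euc n, patch P R x = patch P R y →
    ({0} : Set (Euc n)) ∩ shiftSet Q x = ({0} : Set (Euc n)) ∩ shiftSet Q y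

/-- Hypothesis (H): for every `r > 0` there is `r' > 0` such that for all `x`,
`B(φ(x), r) ∩ φ(P) ⊆ φ(B(x, r') ∩ P)`. -/
def HypoH {n : ℕ} (P : Set (Euc n)) (φ : Euc n → Euc n) : Prop :=
  ∀ r > 0, ∃ r' > 0, ∀ x : Euc n, ball (φ x) r ∩ (φ '' P) ⊆ φ '' (ball x r' ∩ P)

/-- The pattern metric `D` on closed subsets of ℝⁿ. -/
def patternDist {n : ℕ} (A B : Set (Euc n)) : ℝ :=
  sInf {ε : ℝ | 0 < ε ∧ Metric.hausdorffDist
    ((ball (0 : Euc n) (1 / ε) ∩ A) ∪ sphere (0 : Euc n) (1 / ε))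
    ((ball (0 : Euc n) (1 / ε) ∩ B) ∪ sphere (0 : Euc n) (1 / ε)) ≤ ε}

/-- A continuous `f : ℝⁿ → ℝⁿ` is weakly `P`-equivariant if it is uniformly approximated
by strongly `P`-equivariant continuous functions. -/
def WeakEquiv {n : ℕ} (P : Set (Euc n)) (f : Euc n → Euc n) : Prop :=
  ∀ ε > 0, ∃ g : Euc n → Euc n, Continuous g ∧ StrongEquiv P g ∧ ∀ x : Euc n, ‖f x - g x‖ < ε

/-- `P` is aperiodic: the only translation fixing `P` is `0`. -/
def IsAperiodicSet {n : ℕ} (P : Set (Euc n)) : Prop :=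
  ∀ x : Euc n, shiftSet P x = P → x = 0


section Patches

variable {n : ℕ} {P : Set (Euc n)}

lemma mem_patch_iff {r : ℝ} {x u : Euc n} : u ∈ patch P r x ↔ ‖u‖ < r ∧ x + u ∈ P := by
  simp only [patch, shiftSet, mem_inter_iff, mem_ball_zero_iff, mem_image, and_congr_right_iff]
  intro _
  constructor
  · rintro ⟨p, hp, rfl⟩
    simpa using hp
  · exact fun h => ⟨x + u, h, by simp⟩

lemma patch_add_eq {T r : ℝ} {x y u : Euc n} (h : patch P T x = patch P T y)
    (hu : ‖u‖ + r ≤ T) : patch P r (x + u) = patch P r (y + u) := by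
  ext v
  simp only [mem_patch_iff, and_congr_right_iff, add_assoc]
  intro hv
  have hT : ‖u + v‖ < T := (norm_add_le u v).trans_lt (by linarith)
  have := Set.ext_iff.1 h (u + v)
  simpa only [mem_patch_iff, hT, true_and] using this

lemma patch_eq_of_le {T r : ℝ} {x y : Euc n} (h : patch P T x = patch P T y)
    (hr : r ≤ T) : patch P r x = patch P r y := by
  simpa using patch_add_eq (u := 0) h (by simpa using hr)

/-- Under finite local complexity, a locally determined quantity takes finitely many values. -/
lemma FLC.finite_image {β : Type*} (hFLC : FLC P) {r : ℝ} (hr : 0 < r) {f : Euc n → β}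
    (hf : ∀ p ∈ P, ∀ q ∈ P, patch P r p = patch P r q → f p = f q) : (f '' P).Finite := by
  classical
  rcases P.eq_empty_or_nonempty with rfl | ⟨p₀, hp₀⟩
  · simp
  let g : Set (Euc n) → β := fun s =>
    if h : ∃ p ∈ P, s = patch P r p then f h.choose else f p₀
  refine ((hFLC r hr).image g).subset ?_
  rintro _ ⟨p, hp, rfl⟩
  have h : ∃ q ∈ P, patch P r p = patch P r q := ⟨p, hp, rfl⟩
  refine ⟨patch P r p, h, ?_⟩
  simp only [g, dif_pos h]
  exact hf _ h.choose_spec.1 _ hp h.choose_spec.2.symm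

lemma UnifDiscrete.finite_inter_ball (hUD : UnifDiscrete P) (x : Euc n) (r : ℝ) :
    (P ∩ ball x r).Finite := by
  obtain ⟨δ, hδ, hP⟩ := hUD
  have hdist : ∀ p ∈ P, ∀ q ∈ P, p ≠ q → δ ≤ dist p q := fun p hp q hq hpq => by
    simpa [dist_eq_norm] using hP p hp q hq hpq
  have hclosed : IsClosed P := Metric.isClosed_of_pairwise_le_dist hδ hdist
  have : DiscreteTopology P := DiscreteTopology.of_forall_le_dist hδ
    fun p q hpq => hdist p p.2 q q.2 (by simpa [Subtype.ext_iff] using hpq)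
  rw [inter_comm]
  exact Metric.finite_isBounded_inter_isClosed ⟨this⟩ isBounded_ball hclosed

lemma ncard_patch (r : ℝ) (x : Euc n) : (patch P r x).ncard = (P ∩ ball x r).ncard := by
  have : P ∩ ball x r = (fun u => x + u) '' patch P r x := by
    ext p
    simp only [mem_inter_iff, mem_ball, dist_eq_norm, mem_image, mem_patch_iff]
    constructor
    · exact fun h => ⟨p - x, by simpa using h.symm⟩
    · rintro ⟨u, hu, rfl⟩
      simpa using hu.symm
  rw [this, ncard_image_of_injective _ (add_right_injective x)]

/-- The number of points in balls of a fixed radius is bounded. -/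
lemma exists_ncard_inter_ball_le (hUD : UnifDiscrete P) (hRD : RelDense P) (hFLC : FLC P)
    {r : ℝ} (hr : 0 < r) : ∃ K : ℕ, ∀ x, (P ∩ ball x r).ncard ≤ K := by
  obtain ⟨R, hR, hRP⟩ := hRD
  have hfin := hFLC.finite_image (add_pos hr hR) (f := fun x => (patch P (r + R) x).ncard)
    (fun p _ q _ h => by simp only [h])
  obtain ⟨K, hK⟩ := hfin.bddAbove
  refine ⟨K, fun x => ?_⟩
  obtain ⟨p, hp, hpx⟩ := hRP x
  refine le_trans ?_ (hK ⟨p, hp, rfl⟩)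
  simp only [ncard_patch]
  refine ncard_le_ncard (inter_subset_inter_right _ (ball_subset_ball' ?_))
    (hUD.finite_inter_ball _ _)
  rw [dist_comm, dist_eq_norm]
  linarith

lemma EquivRange.mono {F : Type*} {R T : ℝ} {f : Euc n → F} (hf : EquivRange P R f)
    (h : R ≤ T) : EquivRange P T f :=
  fun x y hxy => hf x y (patch_eq_of_le hxy h)

/-- If `dφ` is `P`-equivariant, then so are the increments of `φ`. -/
lemma sub_eq_sub_of_equivRange_fderiv {φ : Euc n → ℝ} (hφ : Differentiable ℝ φ) {R r T : ℝ}
    (hR : EquivRange P R (fderiv ℝ φ)) (hT : r + R ≤ T) {x y u : Euc n}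
    (hxy : patch P T x = patch P T y) (hu : ‖u‖ < r) :
    φ (x + u) - φ x = φ (y + u) - φ y := by
  have hd : ∀ z : Euc n, Differentiable ℝ fun v => φ (z + v) := fun z =>
    hφ.comp (differentiable_id.const_add z)
  have hconst := isOpen_ball.is_const_of_fderiv_eq_zero (𝕜 := ℝ)
    (f := fun v => φ (x + v) - φ (y + v)) (s := ball (0 : Euc n) r)
    (convex_ball _ _).isPreconnected
    ((hd x).sub (hd y)).differentiableOn (fun v hv => by
      rw [mem_ball_zero_iff] at hv
      have := hR _ _ (patch_add_eq (u := v) (r := R) hxy (by linarith))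
      rw [fderiv_fun_sub (hd x v) (hd y v), fderiv_comp_add_left, fderiv_comp_add_left, this,
        sub_self, Pi.zero_apply])
    (x := u) (y := 0) (by simpa using hu)
    (by simpa using (norm_nonneg u).trans_lt hu)
  simp only [add_zero] at hconst
  linarith

end Patches

section LocalAverage

variable {n : ℕ}

/-- The sum of the values of `a` on `P`, weighted by the translate of the bump `ρ` to `x`. -/
def localSum (P : Set (Euc n)) (ρ : ContDiffBump (0 : Euc n)) (a : Euc n → ℝ) (x : Euc n) : ℝ :=
  ∑ᶠ u ∈ patch P ρ.rOut x, ρ u * a (x + u)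

/-- The average of the values of `a` on `P`, weighted by the translate of the bump `ρ` to `x`. -/
def localAverage (P : Set (Euc n)) (ρ : ContDiffBump (0 : Euc n)) (a : Euc n → ℝ)
    (x : Euc n) : ℝ :=
  localSum P ρ a x / localSum P ρ 1 x

variable {P : Set (Euc n)} {ρ : ContDiffBump (0 : Euc n)}

lemma localSum_eq_sum (a : Euc n → ℝ) {x : Euc n} {s : Finset (Euc n)} (hs : ∀ p ∈ s, p ∈ P)
    (hs' : ∀ p ∈ P, ‖p - x‖ < ρ.rOut → p ∈ s) :
    localSum P ρ a x = ∑ p ∈ s, ρ (p - x) * a p := by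
  classical
  have : ∑ p ∈ s, ρ (p - x) * a p = ∑ u ∈ s.image (fun p => p - x), ρ u * a (x + u) := by
    rw [Finset.sum_image (sub_left_injective.injOn)]
    simp
  rw [this, localSum]
  refine finsum_mem_eq_sum_of_inter_support_eq _ ?_
  ext u
  simp only [mem_inter_iff, Function.mem_support, mem_patch_iff, Finset.coe_image, mem_image,
    Finset.mem_coe, and_congr_left_iff]
  intro hu
  constructor
  · rintro ⟨hlt, hP⟩
    exact ⟨x + u, hs' _ hP (by simpa using hlt), by simp⟩
  · rintro ⟨p, hp, rfl⟩
    refine ⟨?_, by simpa using hs p hp⟩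
    by_contra h
    exact hu (by rw [ρ.zero_of_le_dist (by simpa using h), zero_mul])

lemma localSum_eventuallyEq (hUD : UnifDiscrete P) (a : Euc n → ℝ) (x₀ : Euc n) :
    localSum P ρ a =ᶠ[nhds x₀] fun x =>
      ∑ p ∈ (hUD.finite_inter_ball x₀ (ρ.rOut + 1)).toFinset, ρ (p - x) * a p := by
  filter_upwards [ball_mem_nhds x₀ one_pos] with x hx
  refine localSum_eq_sum a (fun p hp => ?_) (fun p hp hpx => ?_)
  · simp only [Finite.mem_toFinset] at hp
    exact hp.1
  · simp only [Finite.mem_toFinset]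
    refine ⟨hp, ?_⟩
    rw [mem_ball] at hx ⊢
    rw [← dist_eq_norm] at hpx
    linarith [dist_triangle p x x₀]

lemma contDiff_localSum (hUD : UnifDiscrete P) (a : Euc n → ℝ) {k : ℕ} :
    ContDiff ℝ k (localSum P ρ a) := by
  rw [contDiff_iff_contDiffAt]
  intro x₀
  refine ContDiffAt.congr_of_eventuallyEq ?_ (localSum_eventuallyEq hUD a x₀)
  refine ContDiff.contDiffAt (ContDiff.sum fun p _ => ContDiff.mul ?_ contDiff_const)
  exact ρ.contDiff.comp (contDiff_const.sub contDiff_id)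

lemma localSum_one_pos (hUD : UnifDiscrete P) (hρ : ∀ x, ∃ p ∈ P, ‖p - x‖ < ρ.rOut) (x : Euc n) :
    0 < localSum P ρ 1 x := by
  rw [(localSum_eventuallyEq hUD 1 x).self_of_nhds]
  obtain ⟨p, hp, hpx⟩ := hρ x
  refine Finset.sum_pos' (fun q _ => by simpa using ρ.nonneg) ⟨p, ?_, ?_⟩
  · simp only [Finite.mem_toFinset, mem_inter_iff, mem_ball, dist_eq_norm]
    exact ⟨hp, by linarith⟩
  · simpa using ρ.pos_of_mem_ball (x := p - x) (by simpa using hpx)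

lemma contDiff_localAverage (hUD : UnifDiscrete P) (hρ : ∀ x, ∃ p ∈ P, ‖p - x‖ < ρ.rOut)
    (a : Euc n → ℝ) {k : ℕ} : ContDiff ℝ k (localAverage P ρ a) :=
  (contDiff_localSum hUD a).div (contDiff_localSum hUD 1)
    fun x => (localSum_one_pos hUD hρ x).ne'

lemma equivRange_localSum_one : EquivRange P ρ.rOut (localSum P ρ 1) := by
  intro x y h
  simp [localSum, h]

/-- The averages of `a` and `b` around points `x` and `y` with equal patches differ by a constant
if the values of `a` and `b` on these patches do. -/
lemma localAverage_eq_add (hUD : UnifDiscrete P) (hρ : ∀ x, ∃ p ∈ P, ‖p - x‖ < ρ.rOut)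
    {a b : Euc n → ℝ} {x y : Euc n} (hxy : patch P ρ.rOut x = patch P ρ.rOut y) {t : ℝ}
    (h : ∀ u ∈ patch P ρ.rOut x, a (x + u) = b (y + u) + t) :
    localAverage P ρ a x = localAverage P ρ b y + t := by
  have hone := equivRange_localSum_one (ρ := ρ) x y hxy
  have hfin : (patch P ρ.rOut y).Finite := by
    refine ((hUD.finite_inter_ball y ρ.rOut).preimage
      (add_right_injective y).injOn).subset fun u hu => ?_
    rw [mem_patch_iff] at hu
    simpa using hu.symm
  have hsum : localSum P ρ a x = localSum P ρ b y + localSum P ρ 1 y * t := by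
    have : localSum P ρ a x = ∑ᶠ u ∈ patch P ρ.rOut y, (ρ u * b (y + u) + ρ u * 1 * t) := by
      rw [localSum, ← hxy]
      refine finsum_mem_congr rfl fun u hu => ?_
      rw [h u hu]
      ring
    rw [this, finsum_mem_add_distrib hfin, ← finsum_mem_mul]
    rfl
  have hpos := localSum_one_pos hUD hρ y
  rw [localAverage, localAverage, hone, hsum]
  field_simp

/-- The members of the partition of unity subordinate to `P` have uniformly bounded derivatives. -/
lemma exists_norm_iteratedFDeriv_le (hUD : UnifDiscrete P) (hFLC : FLC P)
    (hρ : ∀ x, ∃ p ∈ P, ‖p - x‖ < ρ.rOut) (k : ℕ) :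
    ∃ M : ℝ, ∀ p ∈ P, ∀ i ≤ k, ∀ x,
      ‖iteratedFDeriv ℝ i (fun z => ρ (p - z) / localSum P ρ 1 z) x‖ ≤ M := by
  let W : Euc n → Euc n → ℝ := fun p z => ρ (-z) / localSum P ρ 1 (p + z)
  have hfin : (W '' P).Finite := by
    refine hFLC.finite_image (r := ρ.rOut + ρ.rOut) (by linarith [ρ.rOut_pos])
      fun p _ q _ hpq => ?_
    funext z
    by_cases hz : ‖z‖ ≤ ρ.rOut
    · simp only [W]
      rw [equivRange_localSum_one _ _ (patch_add_eq (u := z) hpq (by linarith))]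
    · simp only [W]
      rw [ρ.zero_of_le_dist (by simpa using (not_le.1 hz).le), zero_div, zero_div]
  have hW : ∀ p, ContDiff ℝ k (W p) := fun p =>
    (ρ.contDiff.comp contDiff_neg).div
      ((contDiff_localSum hUD 1).comp (contDiff_const.add contDiff_id))
      fun z => (localSum_one_pos hUD hρ _).ne'
  have hWc : ∀ p, HasCompactSupport (W p) := fun p => by
    have hWp : W p = ρ * fun z => (localSum P ρ 1 (p + z))⁻¹ := by
      funext z
      simp [W, div_eq_mul_inv, ρ.neg]
    rw [hWp]
    exact ρ.hasCompactSupport.mul_right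
  have hbound : ∀ᶠ M : ℝ in Filter.atTop, ∀ f ∈ W '' P, ∀ i ∈ Finset.range (k + 1), ∀ x,
      ‖iteratedFDeriv ℝ i f x‖ ≤ M := by
    refine (Filter.eventually_all_finite hfin).2 ?_
    rintro _ ⟨p, hp, rfl⟩
    refine (Filter.eventually_all_finset _).2 fun i hi => ?_
    have hik : i ≤ k := Nat.lt_succ_iff.1 (Finset.mem_range.1 hi)
    obtain ⟨C, hC⟩ := ((hW p).continuous_iteratedFDeriv
      (by exact_mod_cast hik)).bounded_above_of_compact_support ((hWc p).iteratedFDeriv i)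
    filter_upwards [Filter.eventually_ge_atTop C] with M hM x using (hC x).trans hM
  obtain ⟨M, hM⟩ := hbound.exists
  refine ⟨M, fun p hp i hi x => ?_⟩
  have : (fun z => ρ (p - z) / localSum P ρ 1 z) = fun z => W p (z - p) := by
    funext z
    simp [W]
  rw [this, iteratedFDeriv_comp_sub]
  exact hM _ ⟨p, hp, rfl⟩ i (Finset.mem_range.2 (Nat.lt_succ_iff.2 hi)) _

/-- Local averages of functions which are small on `P` are small in the `C^k` norm. -/
lemma exists_norm_iteratedFDeriv_localAverage_le (hUD : UnifDiscrete P) (hRD : RelDense P)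
    (hFLC : FLC P) (hρ : ∀ x, ∃ p ∈ P, ‖p - x‖ < ρ.rOut) (k : ℕ) :
    ∃ C > 0, ∀ (a : Euc n → ℝ) (η : ℝ), (∀ p ∈ P, |a p| ≤ η) → ∀ i ≤ k, ∀ x,
      ‖iteratedFDeriv ℝ i (localAverage P ρ a) x‖ ≤ C * η := by
  obtain ⟨M, hM⟩ := exists_norm_iteratedFDeriv_le hUD hFLC hρ k
  obtain ⟨K, hK⟩ := exists_ncard_inter_ball_le hUD hRD hFLC (r := ρ.rOut + 1)
    (by linarith [ρ.rOut_pos])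
  obtain ⟨p₀, hp₀, -⟩ := hρ 0
  have hM0 : 0 ≤ M := (norm_nonneg _).trans (hM p₀ hp₀ 0 (Nat.zero_le _) 0)
  refine ⟨K * M + 1, by positivity, fun a η ha i hi x => ?_⟩
  have hη : 0 ≤ η := (abs_nonneg _).trans (ha p₀ hp₀)
  set s := (hUD.finite_inter_ball x (ρ.rOut + 1)).toFinset with hs
  have heq : localAverage P ρ a =ᶠ[nhds x]
      fun z => ∑ p ∈ s, a p • (ρ (p - z) / localSum P ρ 1 z) := by
    filter_upwards [localSum_eventuallyEq (ρ := ρ) hUD a x] with z hz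
    rw [localAverage, hz, Finset.sum_div]
    refine Finset.sum_congr rfl fun p _ => ?_
    simp only [smul_eq_mul]
    ring
  have hw : ∀ p, ContDiff ℝ i fun z => ρ (p - z) / localSum P ρ 1 z := fun p =>
    (ρ.contDiff.comp (contDiff_const.sub contDiff_id)).div (contDiff_localSum hUD 1)
      fun z => (localSum_one_pos hUD hρ z).ne'
  rw [(heq.iteratedFDeriv ℝ i).self_of_nhds,
    iteratedFDeriv_fun_sum_apply fun p _ => ((hw p).const_smul (a p)).contDiffAt]
  have hcard : (s.card : ℝ) ≤ K := by
    rw [hs, ← ncard_eq_toFinset_card _ (hUD.finite_inter_ball x (ρ.rOut + 1))]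
    exact_mod_cast hK x
  calc _ ≤ ∑ p ∈ s, η * M := by
        refine norm_sum_le_of_le _ fun p hp => ?_
        have hpP : p ∈ P := by
          simp only [hs, Finite.mem_toFinset] at hp
          exact hp.1
        rw [iteratedFDeriv_const_smul_apply' (hw p).contDiffAt, norm_smul, Real.norm_eq_abs]
        exact mul_le_mul (ha p hpP) (hM p hpP i hi x) (norm_nonneg _) hη
    _ = s.card * (η * M) := by simp
    _ ≤ K * (η * M) := by gcongr
    _ ≤ (K * M + 1) * η := by nlinarith

end LocalAverage

section Approximation

variable {n : ℕ} {P : Set (Euc n)}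

/-- The points of `P` with a prescribed patch form a locally derivable set. -/
lemma locallyDerivable_setOf_patch_eq {R : ℝ} (hR : 0 < R) (c : Set (Euc n)) :
    LocallyDerivable P {p ∈ P | patch P R p = c} := by
  refine ⟨R, hR, fun x y hxy => ?_⟩
  have h0 := Set.ext_iff.1 hxy 0
  simp only [mem_patch_iff, norm_zero, hR, true_and, add_zero] at h0
  ext u
  simp only [mem_inter_iff, mem_singleton_iff, shiftSet, mem_image, mem_ofPred_eq,
    and_congr_right_iff]
  rintro rfl
  simp [sub_eq_zero, h0, hxy]

/-- If `φ` is close on `P` to a strongly `P`-equivariant function, then `P` has a finite partition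
into locally derivable sets on which `φ` is almost constant. -/
lemma exists_partition_of_strongEquiv (hFLC : FLC P) {φ ψ : Euc n → ℝ} (hψ : StrongEquiv P ψ)
    {ε : ℝ} (h : ∀ p ∈ P, |φ p - ψ p| < ε / 2) :
    ∃ N : ℕ, ∃ Q : Fin N → Set (Euc n),
      (∀ i, Q i ⊆ P) ∧ (∀ i j, i ≠ j → Disjoint (Q i) (Q j)) ∧ (⋃ i, Q i) = P ∧
      (∀ i, LocallyDerivable P (Q i)) ∧
      ∀ i, ∀ p ∈ Q i, ∀ q ∈ Q i, |φ p - φ q| < ε := by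
  obtain ⟨R, hR, hψR⟩ := hψ
  obtain ⟨N, c, hc, hrange⟩ := (hFLC R hR).fin_param
  refine ⟨N, fun i => {p ∈ P | patch P R p = c i}, fun i => sep_subset _ _, fun i j hij => ?_, ?_,
    fun i => locallyDerivable_setOf_patch_eq hR _, ?_⟩
  · rw [Set.disjoint_left]
    rintro p ⟨_, hp⟩ ⟨_, hq⟩
    exact hij (hc (hp.symm.trans hq))
  · ext p
    simp only [mem_iUnion, mem_ofPred_eq, exists_and_left, and_iff_left_iff_imp]
    intro hp
    have : patch P R p ∈ range c := hrange ▸ ⟨p, hp, rfl⟩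
    obtain ⟨i, hi⟩ := this
    exact ⟨i, hi.symm⟩
  · rintro i p ⟨hp, hpc⟩ q ⟨hq, hqc⟩
    have heq : ψ p = ψ q := hψR p q (hpc.trans hqc.symm)
    have h1 := abs_lt.1 (h p hp)
    have h2 := abs_lt.1 (h q hq)
    rw [abs_lt]
    constructor <;> linarith

lemma strongEquiv_indicator {Q : Set (Euc n)} (hQ : LocallyDerivable P Q) (t : ℝ) :
    StrongEquiv P (Q.indicator fun _ => t) := by
  classical
  obtain ⟨R, hR, h⟩ := hQ
  refine ⟨R, hR, fun x y hxy => ?_⟩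
  have h0 : x ∈ Q ↔ y ∈ Q := by
    simpa [shiftSet, sub_eq_zero] using Set.ext_iff.1 (h x y hxy) 0
  simp [indicator_apply, h0]

lemma strongEquiv_sum {ι : Type*} (s : Finset ι) {f : ι → Euc n → ℝ}
    (hf : ∀ i ∈ s, StrongEquiv P (f i)) : StrongEquiv P fun x => ∑ i ∈ s, f i x := by
  classical
  induction s using Finset.induction_on with
  | empty => exact ⟨1, one_pos, fun x y _ => by simp⟩
  | insert i s hi ih =>
    obtain ⟨R, hR, h⟩ := ih fun j hj => hf j (Finset.mem_insert_of_mem hj)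
    obtain ⟨T, hT, h'⟩ := hf i (Finset.mem_insert_self i s)
    refine ⟨max R T, lt_max_of_lt_left hR, fun x y hxy => ?_⟩
    have h1 := h.mono (le_max_left R T) x y hxy
    have h2 := h'.mono (le_max_right R T) x y hxy
    simp only at h1
    simp only [Finset.sum_insert hi, h1, h2]

/-- If `φ` is almost constant on the members of a finite partition of `P` into locally derivable
sets, then `φ` is close on `P` to a strongly `P`-equivariant function. -/
lemma exists_strongEquiv_of_partition {φ : Euc n → ℝ} {ε : ℝ} {N : ℕ} {Q : Fin N → Set (Euc n)}
    (hdisj : ∀ i j, i ≠ j → Disjoint (Q i) (Q j)) (hP : (⋃ i, Q i) = P)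
    (hder : ∀ i, LocallyDerivable P (Q i))
    (hφ : ∀ i, ∀ p ∈ Q i, ∀ q ∈ Q i, |φ p - φ q| < ε) :
    ∃ c : Euc n → ℝ, StrongEquiv P c ∧ ∀ p ∈ P, |φ p - c p| < ε := by
  classical
  have hrep : ∀ i, ∃ q, (Q i).Nonempty → q ∈ Q i := fun i => by
    by_cases h : (Q i).Nonempty
    · exact ⟨h.some, fun _ => h.some_mem⟩
    · exact ⟨0, fun h' => absurd h' h⟩
  choose q hq using hrep
  refine ⟨fun x => ∑ i, (Q i).indicator (fun _ => φ (q i)) x,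
    strongEquiv_sum _ fun i _ => strongEquiv_indicator (hder i) _, fun p hp => ?_⟩
  rw [← hP, mem_iUnion] at hp
  obtain ⟨i, hi⟩ := hp
  beta_reduce
  rw [Finset.sum_eq_single i (fun j _ hji => indicator_of_notMem
    (Set.disjoint_left.1 (hdisj i j hji.symm) hi) _) (by simp), indicator_of_mem hi]
  exact hφ i p hi _ (hq i ⟨p, hi⟩)

/-- If `dφ` is strongly equivariant and `φ` is close on `P` to a strongly equivariant function,
subtracting the local average of the error makes `φ` strongly equivariant. -/
lemma strongEquiv_sub_localAverage (hUD : UnifDiscrete P) {ρ : ContDiffBump (0 : Euc n)}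
    (hρ : ∀ x, ∃ p ∈ P, ‖p - x‖ < ρ.rOut) {φ c : Euc n → ℝ} (hφ : Differentiable ℝ φ)
    (hdφ : StrongEquiv P (fderiv ℝ φ)) (hc : StrongEquiv P c) :
    StrongEquiv P fun x => φ x - localAverage P ρ (fun y => φ y - c y) x := by
  obtain ⟨R, hR, hφR⟩ := hdφ
  obtain ⟨T, hT, hcT⟩ := hc
  have hρ0 := ρ.rOut_pos
  refine ⟨ρ.rOut + (R + T), by positivity, fun x y hxy => ?_⟩
  have := localAverage_eq_add hUD hρ (a := fun y => φ y - c y) (b := fun y => φ y - c y)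
    (t := φ x - φ y) (patch_eq_of_le hxy (by linarith)) fun u hu => by
      have hu' := (mem_patch_iff.1 hu).1
      have h1 := sub_eq_sub_of_equivRange_fderiv hφ hφR
        (by linarith : ρ.rOut + R ≤ ρ.rOut + (R + T)) hxy hu'
      have h2 := hcT _ _ (patch_add_eq (u := u) hxy (by linarith))
      simp only [h2]
      linarith
  simp only [this]
  ring

end Approximation

theorem stmt4 {n : ℕ} (P : Set (Euc n))
    (hUD : UnifDiscrete P) (hRD : RelDense P) (hFLC : FLC P)
    (k : ℕ) (hk : 1 ≤ k) (φ : Euc n → ℝ) (hφ : ContDiff ℝ k φ)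
    (hdφ : StrongEquiv P (fderiv ℝ φ)) :
    (∀ ε > 0, ∃ φε : Euc n → ℝ, ContDiff ℝ k φε ∧ StrongEquiv P φε ∧
        ∀ i ≤ k, ∀ x : Euc n, ‖iteratedFDeriv ℝ i (fun y => φ y - φε y) x‖ < ε)
    ↔ (∀ ε > 0, ∃ N : ℕ, ∃ Q : Fin N → Set (Euc n),
        (∀ i, Q i ⊆ P) ∧ (∀ i j, i ≠ j → Disjoint (Q i) (Q j)) ∧ (⋃ i, Q i) = P ∧
        (∀ i, LocallyDerivable P (Q i)) ∧
        ∀ i, ∀ p ∈ Q i, ∀ q ∈ Q i, |φ p - φ q| < ε) := by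
  constructor
  · intro h ε hε
    obtain ⟨ψ, -, hψ, hclose⟩ := h (ε / 2) (half_pos hε)
    refine exists_partition_of_strongEquiv hFLC hψ fun p _ => ?_
    simpa using hclose 0 (Nat.zero_le k) p
  · intro h ε hε
    obtain ⟨R, hR, hRP⟩ := id hRD
    let ρ : ContDiffBump (0 : Euc n) := ⟨R / 2, R, half_pos hR, half_lt_self hR⟩
    have hρ : ∀ x, ∃ p ∈ P, ‖p - x‖ < ρ.rOut := hRP
    obtain ⟨C, hC, hbound⟩ := exists_norm_iteratedFDeriv_localAverage_le hUD hRD hFLC hρ k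
    obtain ⟨N, Q, -, hdisj, hP, hder, hQ⟩ := h (ε / (2 * C)) (by positivity)
    obtain ⟨c, hc, hφc⟩ := exists_strongEquiv_of_partition hdisj hP hder hQ
    have hdiff : Differentiable ℝ φ := hφ.differentiable (by exact_mod_cast (by omega : k ≠ 0))
    refine ⟨fun x => φ x - localAverage P ρ (fun y => φ y - c y) x,
      hφ.sub (contDiff_localAverage hUD hρ _),
      strongEquiv_sub_localAverage hUD hρ hdiff hdφ hc, fun i hi x => ?_⟩
    simp only [sub_sub_cancel]
    refine (hbound _ _ (fun p hp => (hφc p hp).le) i hi x).trans_lt ?_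
    rw [mul_div_assoc', div_lt_iff₀ (by positivity)]
    nlinarith
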